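/- With the coherence-optimal density f_Y(ξ) = P⁻¹ f(ξ) B(ξ)² and weight w(ξ) = √P · B(ξ)⁻¹ (on the set where B(ξ) ≠ 0), the coherence parameter μ = sup_ξ Σ_{j=1}^P |w(ξ) ψ_j(ξ)|² equals exactly P, and this is the minimum possible value of μ over all choices satisfying w(ξ)² f_Y(ξ) = f(ξ): for any probability density g on Ω with g > 0 where f B² > 0 and weight w = √(f/g), one has sup_ξ Σ_j |w(ξ)ψ_j(ξ)|² ≥ P. -/

import Mathlib

open MeasureTheory

theorem stmt14 {Ω : Type*} [MeasurableSpace Ω] (m : Measure Ω)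
    {P : ℕ} (hP : 0 < P) (ψ : Fin P → Ω → ℝ) (f g : Ω → ℝ)
    (hf : ∀ x, 0 ≤ f x) (hg : ∀ x, 0 ≤ g x)
    (hfint : ∫ x, f x ∂m = 1) (hgint : ∫ x, g x ∂m = 1)
    (hint : ∀ i j, Integrable (fun x => ψ i x * ψ j x * f x) m)
    (horth : ∀ i j, ∫ x, ψ i x * ψ j x * f x ∂m = if i = j then 1 else 0)
    (hpos : ∀ x, f x * (∑ j, (ψ j x) ^ 2) ≠ 0 → 0 < g x) :
    (∀ C : ℝ, (∀ x, ∑ j, (Real.sqrt (f x / g x) * ψ j x) ^ 2 ≤ C) → (P : ℝ) ≤ C) ∧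
      (∀ x, (∑ j, (ψ j x) ^ 2) ≠ 0 →
        ∑ j, (Real.sqrt ((P : ℝ) / ∑ k, (ψ k x) ^ 2) * ψ j x) ^ 2 = P) := by
  have key : ∀ (a : ℝ) (x : Ω), 0 ≤ a →
      ∑ j, (Real.sqrt a * ψ j x) ^ 2 = a * ∑ j, (ψ j x) ^ 2 := by
    intro a x ha
    rw [Finset.mul_sum]
    refine Finset.sum_congr rfl fun j _ => ?_
    rw [mul_pow, Real.sq_sqrt ha]
  have hB : ∀ x, 0 ≤ ∑ j, (ψ j x) ^ 2 := fun x => Finset.sum_nonneg fun j _ => sq_nonneg _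
  refine ⟨fun C hC => ?_, fun x hx => ?_⟩
  · have hgI : Integrable g m := by
      by_contra h
      rw [integral_undef h] at hgint
      exact zero_ne_one hgint
    have hsum : ∫ x, ∑ j, ψ j x * ψ j x * f x ∂m = P := by
      rw [integral_finsetSum _ fun j _ => hint j j]
      simp [horth]
    have hle : ∫ x, ∑ j, ψ j x * ψ j x * f x ∂m ≤ ∫ x, C * g x ∂m := by
      refine integral_mono (integrable_finsetSum _ fun j _ => hint j j) (hgI.const_mul C) ?_
      intro x
      have e : ∑ j, ψ j x * ψ j x * f x = f x * ∑ j, (ψ j x) ^ 2 := by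
        rw [Finset.mul_sum]
        exact Finset.sum_congr rfl fun j _ => by ring
      have hx := hC x
      have h0 : 0 ≤ C := le_trans (Finset.sum_nonneg fun j _ => sq_nonneg _) hx
      rw [key _ x (div_nonneg (hf x) (hg x))] at hx
      show ∑ j, ψ j x * ψ j x * f x ≤ C * g x
      rw [e]
      by_cases hz : f x * (∑ j, (ψ j x) ^ 2) = 0
      · rw [hz]
        exact mul_nonneg h0 (hg x)
      · have hgx := hpos x hz
        rwa [div_mul_eq_mul_div, div_le_iff₀ hgx] at hx
    rwa [hsum, integral_const_mul, hgint, mul_one] at hle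
  · rw [key _ x (div_nonneg (Nat.cast_nonneg P) (hB x)), div_mul_cancel₀ _ hx]
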